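/- arXiv:2412.07337 — 2 statements merged into one kernel-verified Lean document; each statement's English description precedes it below -/
import Mathlib

section
/- There exist orthonormal vectors α, α' : Fin 2 → ℂ, two-qubit entangled states Φ and Φ' with ⟨Φ, Φ'⟩ = 0, nonzero real numbers c, d with c² + d² = 1, a completely product three-qubit state p, and nonzero complex numbers a, b, such that a • (c • (α ⊗ Φ) + d • (α' ⊗ Φ')) + b • p is completely product. (Thus when both Schmidt components are entangled, a nontrivial superposition with a suitable completely product state can yield a completely product state.) -/
/-- Tensor product of two single-qubit vectors, as a two-qubit coefficient matrix. -/
def tq (x y : Fin 2 → ℂ) : Fin 2 → Fin 2 → ℂ := fun j k => x j * y k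

/-- Tensor product of a single-qubit vector with a two-qubit state, giving a
three-qubit coefficient tensor. -/
def tqq (α : Fin 2 → ℂ) (w : Fin 2 → Fin 2 → ℂ) : Fin 2 → Fin 2 → Fin 2 → ℂ :=
  fun i j k => α i * w j k

/-- A two-qubit state is a product state if its coefficient matrix factorizes. -/
def ProdState (w : Fin 2 → Fin 2 → ℂ) : Prop :=
  ∃ f g : Fin 2 → ℂ, ∀ j k, w j k = f j * g k

/-- A two-qubit state is entangled if it is nonzero and not a product state. -/
def Entangled2 (w : Fin 2 → Fin 2 → ℂ) : Prop := w ≠ 0 ∧ ¬ ProdState w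

/-- A three-qubit state is completely product if its coefficient tensor factorizes. -/
def CompProd3 (v : Fin 2 → Fin 2 → Fin 2 → ℂ) : Prop :=
  ∃ f g h : Fin 2 → ℂ, ∀ i j k, v i j k = f i * g j * h k

/-- Hermitian inner product on single-qubit vectors. -/
noncomputable def ip1 (u v : Fin 2 → ℂ) : ℂ := ∑ i, (starRingEnd ℂ) (u i) * v i

/-- Hermitian inner product on two-qubit states. -/
noncomputable def ip2 (u v : Fin 2 → Fin 2 → ℂ) : ℂ := ∑ j, ∑ k, (starRingEnd ℂ) (u j k) * v j k

/-- Hermitian inner product on three-qubit states. -/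
noncomputable def ip3 (u v : Fin 2 → Fin 2 → Fin 2 → ℂ) : ℂ :=
  ∑ i, ∑ j, ∑ k, (starRingEnd ℂ) (u i j k) * v i j k

/-!
Take `Φ` and `Φ'` in the span of the two product states `|00⟩` and `|11⟩`. Regrouping
`c α ⊗ Φ + d α' ⊗ Φ'` by these two states leaves only two completely product terms
`β ⊗ |00⟩ + γ ⊗ |11⟩`, and a suitable multiple of the second, itself completely product, cancels it.
Entanglement and orthogonality of `Φ` and `Φ'` constrain only their coefficients on `|00⟩`, `|11⟩`.
-/

open scoped ComplexConjugate

theorem ProdState.det_eq_zero {w : Fin 2 → Fin 2 → ℂ} (hw : ProdState w) :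
    (Matrix.of w).det = 0 := by
  obtain ⟨f, g, hfg⟩ := hw
  simp only [Matrix.det_fin_two, Matrix.of_apply, hfg]
  ring

theorem Entangled2.of_det_ne_zero {w : Fin 2 → Fin 2 → ℂ} (hw : (Matrix.of w).det ≠ 0) :
    Entangled2 w := by
  refine ⟨?_, fun hprod => hw hprod.det_eq_zero⟩
  rintro rfl
  exact hw Matrix.det_zero

/-- The two-qubit state `s |00⟩ + t |11⟩`, in Schmidt form with respect to the standard bases.
The coefficients `s` and `t` are arbitrary complex numbers, so it need not be normalized. -/
def schmidtState (s t : ℂ) : Fin 2 → Fin 2 → ℂ :=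
  s • tq (Pi.single 0 1) (Pi.single 0 1) + t • tq (Pi.single 1 1) (Pi.single 1 1)

theorem det_schmidtState (s t : ℂ) : (Matrix.of (schmidtState s t)).det = s * t := by
  simp [Matrix.det_fin_two, schmidtState, tq]

theorem entangled2_schmidtState {s t : ℂ} (hs : s ≠ 0) (ht : t ≠ 0) :
    Entangled2 (schmidtState s t) :=
  .of_det_ne_zero (det_schmidtState s t ▸ mul_ne_zero hs ht)

theorem ip2_schmidtState (s t s' t' : ℂ) :
    ip2 (schmidtState s t) (schmidtState s' t') = conj s * s' + conj t * t' := by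
  simp [ip2, schmidtState, tq]

theorem compProd3_tqq_tq (α x y : Fin 2 → ℂ) : CompProd3 (tqq α (tq x y)) :=
  ⟨α, x, y, fun _ _ _ => (mul_assoc _ _ _).symm⟩

theorem CompProd3.smul {v : Fin 2 → Fin 2 → Fin 2 → ℂ} (hv : CompProd3 v) (r : ℂ) :
    CompProd3 (r • v) := by
  obtain ⟨f, g, h, hfgh⟩ := hv
  refine ⟨r • f, g, h, fun i j k => ?_⟩
  simp only [Pi.smul_apply, smul_eq_mul, hfgh, mul_assoc]

theorem CompProd3.exists_smul_add_add_smul {v w : Fin 2 → Fin 2 → Fin 2 → ℂ}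
    (hv : CompProd3 v) (hw : CompProd3 w) (a : ℂ) {b : ℂ} (hb : b ≠ 0) :
    ∃ p, CompProd3 p ∧ CompProd3 (a • (v + w) + b • p) := by
  refine ⟨-(a / b) • w, hw.smul _, ?_⟩
  have cancel : a • (v + w) + b • -(a / b) • w = a • v := by
    rw [smul_smul, mul_neg, mul_div_cancel₀ a hb, smul_add, neg_smul, add_neg_cancel_right]
  exact cancel ▸ hv.smul a

theorem smul_tqq_add_smul_tqq (α α' : Fin 2 → ℂ) (u v : Fin 2 → Fin 2 → ℂ)
    (c d s t s' t' : ℂ) :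
    c • tqq α (s • u + t • v) + d • tqq α' (s' • u + t' • v) =
      tqq ((c * s) • α + (d * s') • α') u + tqq ((c * t) • α + (d * t') • α') v := by
  ext i j k
  simp only [tqq, Pi.add_apply, Pi.smul_apply, smul_eq_mul]
  ring

theorem exists_compProd3_superposition_schmidtState (α α' : Fin 2 → ℂ)
    (c d s t s' t' a : ℂ) {b : ℂ} (hb : b ≠ 0) :
    ∃ p, CompProd3 p ∧ CompProd3
      (a • (c • tqq α (schmidtState s t) + d • tqq α' (schmidtState s' t')) + b • p) := by
  simp only [schmidtState, smul_tqq_add_smul_tqq]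
  exact (compProd3_tqq_tq _ _ _).exists_smul_add_add_smul (compProd3_tqq_tq _ _ _) a hb

theorem exists_both_entangled_superposition_completely_product_general :
    ∃ Φ Φ' : Fin 2 → Fin 2 → ℂ,
      Entangled2 Φ ∧ Entangled2 Φ' ∧ ip2 Φ Φ = 1 ∧ ip2 Φ' Φ' = 1 ∧ ip2 Φ Φ' = 0 ∧
      ∀ (α α' : Fin 2 → ℂ) (c d a b : ℂ), b ≠ 0 →
        ∃ p, CompProd3 p ∧ CompProd3 (a • (c • tqq α Φ + d • tqq α' Φ') + b • p) := by
  refine ⟨schmidtState (3 / 5) (4 / 5), schmidtState (4 / 5) (-3 / 5),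
    entangled2_schmidtState (by norm_num) (by norm_num),
    entangled2_schmidtState (by norm_num) (by norm_num), ?_, ?_, ?_,
    fun α α' c d a _ hb => exists_compProd3_superposition_schmidtState α α' c d _ _ _ _ a hb⟩
  all_goals
    simp only [ip2_schmidtState, map_div₀, map_neg, map_ofNat]
    norm_num

/-- Case (iii) of Proposition 3: there exist a Schmidt-form three-qubit state with
both components `Φ`, `Φ'` entangled and orthogonal, and a completely product state
whose nontrivial superposition with it is completely product. -/
theorem exists_both_entangled_superposition_completely_product :
    ∃ (α α' : Fin 2 → ℂ) (Φ Φ' : Fin 2 → Fin 2 → ℂ) (c d : ℝ)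
      (p : Fin 2 → Fin 2 → Fin 2 → ℂ) (a b : ℂ),
      ip1 α α = 1 ∧ ip1 α' α' = 1 ∧ ip1 α α' = 0 ∧
      Entangled2 Φ ∧ Entangled2 Φ' ∧ ip2 Φ Φ' = 0 ∧
      c ≠ 0 ∧ d ≠ 0 ∧ c ^ 2 + d ^ 2 = 1 ∧
      CompProd3 p ∧ a ≠ 0 ∧ b ≠ 0 ∧
      CompProd3 (a • ((c : ℂ) • tqq α Φ + (d : ℂ) • tqq α' Φ') + b • p) := by
  obtain ⟨Φ, Φ', hΦ, hΦ', -, -, horth, hsup⟩ :=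
    exists_both_entangled_superposition_completely_product_general
  obtain ⟨p, hp, hprod⟩ :=
    hsup ![1, 0] ![0, 1] (3 / 5 : ℝ) (4 / 5 : ℝ) 1 1 one_ne_zero
  exact ⟨![1, 0], ![0, 1], Φ, Φ', 3 / 5, 4 / 5, p, 1, 1, by simp [ip1], by simp [ip1],
    by simp [ip1], hΦ, hΦ', horth, by norm_num, by norm_num, by norm_num, hp,
    one_ne_zero, one_ne_zero, hprod⟩
end

section
/- Let v : Fin 2 → Fin 2 → Fin 2 → ℂ be a nonzero three-qubit state that is product across at least one bipartition, i.e., there exist f : Fin 2 → ℂ and w : Fin 2 → Fin 2 → ℂ such that (v i j k = f i * w j k for all i, j, k) or (v i j k = f j * w i k for all i, j, k) or (v i j k = f k * w i j for all i, j, k). Then there exist a nonzero completely product three-qubit state p and nonzero complex numbers a, b such that a • v + b • p is completely product. -/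
/-! Expanding the two-party factor of `v` along the two basis vectors of one of its qubits writes
`v` as a sum of two product tensors. As `v ≠ 0`, one of them, say `p`, is nonzero, and `v - p` is
the other one. -/

section TensorRank

variable {R ι κ μ : Type*} [CommSemiring R]

/-- Product (simple) tensors in coordinates: `CompProd3` for arbitrary coefficients and arbitrary
index types. -/
def IsProductTensor (v : ι → κ → μ → R) : Prop :=
  ∃ (f : ι → R) (g : κ → R) (h : μ → R), ∀ i j k, v i j k = f i * g j * h k

/-- Tensor rank at most `n`. The summands may vanish, so the predicate is monotone in `n`. -/
def TensorRankLE (n : ℕ) (v : ι → κ → μ → R) : Prop :=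
  ∃ p : Fin n → ι → κ → μ → R, (∀ r, IsProductTensor (p r)) ∧ v = ∑ r, p r

theorem TensorRankLE.isProductTensor {v : ι → κ → μ → R} (hv : TensorRankLE 1 v) :
    IsProductTensor v := by
  obtain ⟨p, hp, rfl⟩ := hv
  simpa only [Fin.sum_univ_one] using hp 0

theorem TensorRankLE.exists_eq_add {n : ℕ} {v : ι → κ → μ → R} (hv : TensorRankLE (n + 1) v)
    (hv₀ : v ≠ 0) :
    ∃ p q : ι → κ → μ → R, p ≠ 0 ∧ IsProductTensor p ∧ TensorRankLE n q ∧ v = p + q := by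
  obtain ⟨p, hp, rfl⟩ := hv
  obtain ⟨r, -, hr⟩ := Finset.exists_ne_zero_of_sum_ne_zero hv₀
  exact ⟨p r, ∑ s, p (r.succAbove s), hr, hp r, ⟨_, fun s => hp (r.succAbove s), rfl⟩,
    Fin.sum_univ_succAbove p r⟩

theorem tensorRankLE_of_factor_first {n : ℕ} {v : ι → Fin n → μ → R} (f : ι → R)
    (w : Fin n → μ → R) (hv : ∀ i j k, v i j k = f i * w j k) : TensorRankLE n v := by
  refine ⟨fun r i j k => f i * Pi.single (M := fun _ => R) r 1 j * w r k,
    fun r => ⟨_, _, _, fun _ _ _ => rfl⟩, ?_⟩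
  ext i j k
  simp [hv, Pi.single_apply]

theorem tensorRankLE_of_factor_second {n : ℕ} {v : Fin n → κ → μ → R} (f : κ → R)
    (w : Fin n → μ → R) (hv : ∀ i j k, v i j k = f j * w i k) : TensorRankLE n v := by
  refine ⟨fun r i j k => Pi.single (M := fun _ => R) r 1 i * f j * w r k,
    fun r => ⟨_, _, _, fun _ _ _ => rfl⟩, ?_⟩
  ext i j k
  simp [hv, Pi.single_apply]

theorem tensorRankLE_of_factor_third {n : ℕ} {v : Fin n → κ → μ → R} (f : μ → R)
    (w : Fin n → κ → R) (hv : ∀ i j k, v i j k = f k * w i j) : TensorRankLE n v := by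
  refine ⟨fun r i j k => Pi.single (M := fun _ => R) r 1 i * w r j * f k,
    fun r => ⟨_, _, _, fun _ _ _ => rfl⟩, ?_⟩
  ext i j k
  simp [hv, Pi.single_apply, mul_comm]

end TensorRank

theorem biseparable_superposition_can_be_completely_product_general
    {R μ : Type*} [CommSemiring R] (v : Fin 2 → Fin 2 → μ → R) (hv : v ≠ 0)
    (hbisep :
      (∃ (f : Fin 2 → R) (w : Fin 2 → μ → R), ∀ i j k, v i j k = f i * w j k) ∨
      (∃ (f : Fin 2 → R) (w : Fin 2 → μ → R), ∀ i j k, v i j k = f j * w i k) ∨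
      (∃ (f : μ → R) (w : Fin 2 → Fin 2 → R), ∀ i j k, v i j k = f k * w i j)) :
    ∃ p q : Fin 2 → Fin 2 → μ → R,
      p ≠ 0 ∧ IsProductTensor p ∧ IsProductTensor q ∧ v = p + q := by
  have hrank : TensorRankLE 2 v := by
    rcases hbisep with ⟨f, w, h⟩ | ⟨f, w, h⟩ | ⟨f, w, h⟩
    · exact tensorRankLE_of_factor_first f w h
    · exact tensorRankLE_of_factor_second f w h
    · exact tensorRankLE_of_factor_third f w h
  obtain ⟨p, q, hp₀, hp, hq, hpq⟩ := hrank.exists_eq_add hv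
  exact ⟨p, q, hp₀, hp, hq.isProductTensor, hpq⟩

/-- A nonzero three-qubit state that is product across at least one bipartition can
always be nontrivially superposed with a suitable nonzero completely product state to
yield a completely product state. -/
theorem biseparable_superposition_can_be_completely_product
    (v : Fin 2 → Fin 2 → Fin 2 → ℂ) (hv : v ≠ 0)
    (hbisep :
      (∃ (f : Fin 2 → ℂ) (w : Fin 2 → Fin 2 → ℂ), ∀ i j k, v i j k = f i * w j k) ∨
      (∃ (f : Fin 2 → ℂ) (w : Fin 2 → Fin 2 → ℂ), ∀ i j k, v i j k = f j * w i k) ∨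
      (∃ (f : Fin 2 → ℂ) (w : Fin 2 → Fin 2 → ℂ), ∀ i j k, v i j k = f k * w i j)) :
    ∃ (p : Fin 2 → Fin 2 → Fin 2 → ℂ) (a b : ℂ),
      p ≠ 0 ∧ CompProd3 p ∧ a ≠ 0 ∧ b ≠ 0 ∧ CompProd3 (a • v + b • p) := by
  obtain ⟨p, q, hp₀, hp, hq, rfl⟩ :=
    biseparable_superposition_can_be_completely_product_general v hv hbisep
  have hsub : (1 : ℂ) • (p + q) + (-1 : ℂ) • p = q := by module
  exact ⟨p, 1, -1, hp₀, hp, one_ne_zero, neg_ne_zero.mpr one_ne_zero, hsub.symm ▸ hq⟩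
end
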